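/- Let R be a nonzero commutative ring and let X be the generic n×n matrix over R (entries distinct indeterminates x_{ij} in R[x_{ij}]). Then the Laplace products X{A|B} with A, B ⊆ {1,…,n}, |A| = |B|, and both A and B good, form a basis of the R-submodule of R[x_{ij}] spanned by all Laplace products X{S|T}; in particular they are linearly independent over R and every Laplace product X{S|T} is an R-linear combination (with coefficients ±1) of them. -/

import Mathlib

open Finset

/-- The minor `X(A|B)`: the determinant of the submatrix of `X` with row indices in `A` and
column indices in `B`, taken in increasing order; `0` if `|A| ≠ |B|`. -/
def minorM {m n : ℕ} {R : Type*} [CommRing R]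
    (X : Matrix (Fin m) (Fin n) R) (A : Finset (Fin m)) (B : Finset (Fin n)) : R :=
  if h : A.card = B.card then
    (Matrix.of fun i j : Fin A.card =>
      X (A.orderEmbOfFin rfl i) (B.orderEmbOfFin h.symm j)).det
  else 0

/-- The Laplace product `X{A|B} = (-1)^(ΣA+ΣB) X(A|B) X(Ã|B̃)`, where elements of
`Fin n` are counted as the numbers `1,…,n` (so `i : Fin n` counts as `i+1`). -/
def lap {n : ℕ} {R : Type*} [CommRing R]
    (X : Matrix (Fin n) (Fin n) R) (A B : Finset (Fin n)) : R :=
  (-1 : R) ^ (∑ i ∈ A, ((i : ℕ) + 1) + ∑ j ∈ B, ((j : ℕ) + 1)) *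
    (minorM X A B * minorM X Aᶜ Bᶜ)

/-- The partial order `S ≤ T` on finite subsets of a linearly ordered set:
writing `S = {s₁<⋯<s_p}` and `T = {t₁<⋯<t_q}`, it means `p ≥ q` and `s_ν ≤ t_ν` for `ν ≤ q`. -/
def domLE {α : Type*} [LinearOrder α] (S T : Finset α) : Prop :=
  T.card ≤ S.card ∧ ∀ (ν : ℕ) (hT : ν < (T.sort (· ≤ ·)).length)
    (hS : ν < (S.sort (· ≤ ·)).length),
    (S.sort (· ≤ ·))[ν] ≤ (T.sort (· ≤ ·))[ν]

/-- A subset `S ⊆ {1,…,n}` is good if `S ≤ S̃` where `S̃` is the complement of `S`. -/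
def goodSet {n : ℕ} (S : Finset (Fin n)) : Prop := domLE S Sᶜ

/-- The generic `m×n` matrix, whose entries are the indeterminates `x_{ij}`. -/
noncomputable def genX (m n : ℕ) (R : Type*) [CommRing R] :
    Matrix (Fin m) (Fin n) (MvPolynomial (Fin m × Fin n) R) :=
  Matrix.of fun i j => MvPolynomial.X (i, j)
/-- The good Laplace products of the generic matrix: those `X{A|B}` with `|A| = |B|`
and both `A` and `B` good. -/
noncomputable def goodLap (n : ℕ) (R : Type*) [CommRing R]
    (g : {p : Finset (Fin n) × Finset (Fin n) //
      p.1.card = p.2.card ∧ goodSet p.1 ∧ goodSet p.2}) :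
    MvPolynomial (Fin n × Fin n) R :=
  lap (genX n n R) g.1.1 g.1.2


namespace LapAux
open Equiv

lemma swap_strict {n : ℕ} {j j' : Fin n} (hj : (j' : ℕ) = j + 1) (x y : Fin n) (hxy : x < y)
    (h : ¬ (x = j ∧ y = j')) : swap j j' x < swap j j' y := by
  simp only [swap_apply_def]
  split_ifs <;> simp only [Fin.lt_def, Fin.ext_iff] at * <;> omega

lemma emb_swap {n m : ℕ} {j j' : Fin n} (hj : (j' : ℕ) = j + 1) (A A' : Finset (Fin n))
    (hm : A.card = m) (hm' : A'.card = m) (hA' : ∀ x, x ∈ A → swap j j' x ∈ A')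
    (h : ¬ (j ∈ A ∧ j' ∈ A)) (i : Fin m) :
    A'.orderEmbOfFin hm' i = swap j j' (A.orderEmbOfFin hm i) := by
  have := orderEmbOfFin_unique hm' (f := fun i => swap j j' (A.orderEmbOfFin hm i))
    (fun i => hA' _ (orderEmbOfFin_mem _ _ _)) (by
      intro x y hxy
      apply swap_strict hj _ _ ((A.orderEmbOfFin hm).strictMono hxy)
      rintro ⟨h1, h2⟩
      exact h ⟨h1 ▸ orderEmbOfFin_mem _ _ _, h2 ▸ orderEmbOfFin_mem _ _ _⟩)
  exact (congrFun this i).symm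

lemma initial_eq {n : ℕ} (A : Finset (Fin n))
    (h : ∀ j j' : Fin n, (j' : ℕ) = j + 1 → j' ∈ A → j ∈ A) (x : Fin n) :
    x ∈ A ↔ (x : ℕ) < A.card := by
  have h2 : ∀ d : ℕ, ∀ x y : Fin n, (y : ℕ) = x + d → y ∈ A → x ∈ A := by
    intro d
    induction d with
    | zero =>
      intro x y e hy
      have : x = y := Fin.ext (by omega)
      exact this ▸ hy
    | succ d ih =>
      intro x y e hy
      have hlt : (x : ℕ) + d < n := by have := y.2; omega
      exact ih x ⟨x + d, hlt⟩ rfl (h ⟨x + d, hlt⟩ y (by simp; omega) hy)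
  have h3 : ∀ x y : Fin n, x ≤ y → y ∈ A → x ∈ A := fun x y hxy hy =>
    h2 (y - x) x y (by have : (x : ℕ) ≤ y := hxy; omega) hy
  constructor
  · intro hx
    have : Finset.Iic x ⊆ A := fun y hy => h3 y x (Finset.mem_Iic.1 hy) hx
    have := Finset.card_le_card this
    rw [Fin.card_Iic] at this
    omega
  · intro hx
    by_contra hxA
    have : A ⊆ Finset.Iio x := by
      intro y hy
      rw [Finset.mem_Iio]
      by_contra hc
      exact hxA (h3 x y (not_lt.1 hc) hy)
    have := Finset.card_le_card this
    rw [Fin.card_Iio] at this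
    omega

def wt {n : ℕ} (A : Finset (Fin n)) : ℕ := ∑ i ∈ A, ((i : ℕ) + 1)

lemma sign_shuffle {n m k : ℕ} (A0 : Finset (Fin n)) (h0 : A0.card = m) (h0' : A0ᶜ.card = k)
    (hA0 : ∀ x, x ∈ A0 ↔ (x : ℕ) < m) :
    ∀ (w : ℕ) (A : Finset (Fin n)) (h : A.card = m) (h' : A.card = m) (hc : Aᶜ.card = k),
      wt A = w →
      ((Perm.sign ((finSumEquivOfFinset h0 h0').symm.trans (finSumEquivOfFinset h hc)) : ℤˣ)) =
        (-1) ^ (wt A0 + wt A) := by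
  intro w
  induction w with
  | zero =>
    intro A h h' hc hw
    have hA : A = ∅ := by
      by_contra hne
      obtain ⟨x, hx⟩ := Finset.nonempty_iff_ne_empty.2 hne
      have := Finset.sum_eq_zero_iff.1 hw x hx
      omega
    have : A0 = A := by
      subst hA
      rw [← Finset.card_eq_zero, h0, ← h]; rfl
    subst this
    simp [← two_mul, pow_mul]
  | succ w ih =>
    intro A h h' hc hw
    by_cases hin : ∀ j j' : Fin n, (j' : ℕ) = j + 1 → j' ∈ A → j ∈ A
    · have : A0 = A := by
        ext x
        rw [hA0, initial_eq A hin, h]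
      subst this
      simp [← two_mul, pow_mul]
    · push Not at hin
      obtain ⟨j, j', hj, hj', hjA⟩ := hin
      have hne : j ≠ j' := fun e => hjA (e ▸ hj')
      have e1 : A.map (swap j j').toEmbedding = insert j (A.erase j') := by
        ext x
        simp only [mem_map_equiv, symm_swap, swap_apply_def, mem_insert, mem_erase]
        split_ifs with h1 h2
        · simp [h1, hj']
        · subst h2; simp [hjA, Ne.symm hne]
        · simp [h1, h2]
      set A' := A.map (swap j j').toEmbedding with hA'
      have c1 : A'.card = m := by simp [hA', h]
      have c2 : A'ᶜ.card = k := by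
        rw [card_compl] at hc ⊢
        rw [c1, ← hc, h]
      have hsum : wt A = wt A' + 1 := by
        rw [e1, wt, wt, sum_insert (by simp [hjA]), ← add_sum_erase A _ hj']
        omega
      have e2 : finSumEquivOfFinset c1 c2 = (finSumEquivOfFinset h hc).trans (swap j j') := by
        ext1 x
        rcases x with x | x
        · simp only [Equiv.trans_apply, finSumEquivOfFinset_inl]
          apply emb_swap hj A A' h c1 _ (by tauto)
          intro x hx
          simp [hA', hx]
        · simp only [Equiv.trans_apply, finSumEquivOfFinset_inr]
          apply emb_swap hj Aᶜ A'ᶜ hc c2 _ (by simp; tauto)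
          intro x hx
          simpa [hA'] using hx
      have := ih A' c1 c1 c2 (by omega)
      rw [e2, ← Equiv.trans_assoc, Perm.sign_trans, Perm.sign_swap hne] at this
      rw [hsum, ← add_assoc, pow_succ, ← this]
      simp

lemma exists_initial {n m : ℕ} (hm : m ≤ n) :
    ∃ A0 : Finset (Fin n), A0.card = m ∧ ∀ x, x ∈ A0 ↔ (x : ℕ) < m := by
  refine ⟨univ.filter fun x : Fin n => (x : ℕ) < m, ?_, by simp⟩
  rw [Fin.card_filter_val_lt]
  simpa using hm

lemma sign_shuffle2 {n m k : ℕ} (A B : Finset (Fin n)) (hA : A.card = m) (hA' : Aᶜ.card = k)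
    (hB : B.card = m) (hB' : Bᶜ.card = k) :
    Perm.sign ((finSumEquivOfFinset hA hA').symm.trans (finSumEquivOfFinset hB hB')) =
      (-1) ^ (wt A + wt B) := by
  obtain ⟨A0, h0, h1⟩ := exists_initial (n := n) (m := m)
    (by rw [← hA]; simpa using card_le_univ A)
  have h0' : A0ᶜ.card = k := by
    rw [card_compl] at hA' ⊢
    rw [h0, ← hA', hA]
  have sA := sign_shuffle A0 h0 h0' h1 _ A hA hA hA' rfl
  have sB := sign_shuffle A0 h0 h0' h1 _ B hB hB hB' rfl
  have : (finSumEquivOfFinset hA hA').symm.trans (finSumEquivOfFinset hB hB') =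
      (Equiv.symm ((finSumEquivOfFinset h0 h0').symm.trans (finSumEquivOfFinset hA hA'))).trans
      ((finSumEquivOfFinset h0 h0').symm.trans (finSumEquivOfFinset hB hB')) := by
    ext x; simp
  rw [this, Perm.sign_trans, Perm.sign_symm, sA, sB, ← pow_add]
  rw [show wt A0 + wt B + (wt A0 + wt A) = 2 * wt A0 + (wt A + wt B) by ring, pow_add, pow_mul]
  simp

lemma minorM_eq {n m : ℕ} {R : Type*} [CommRing R] (X : Matrix (Fin n) (Fin n) R)
    (A B : Finset (Fin n)) (hA : A.card = m) (hB : B.card = m) :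
    minorM X A B = (Matrix.of fun i j : Fin m =>
      X (A.orderEmbOfFin hA i) (B.orderEmbOfFin hB j)).det := by
  subst hA
  rw [minorM, dif_pos hB.symm]

lemma map_eq_iff {n : ℕ} (A B : Finset (Fin n)) (σ : Perm (Fin n)) :
    A.map σ.toEmbedding = B ↔ ∀ i, (i ∈ A ↔ σ i ∈ B) := by
  constructor
  · rintro rfl i; simp
  · intro h
    ext x
    rw [mem_map_equiv, h]; simp

/-- General Laplace expansion. -/
lemma lap_eq {n : ℕ} {R : Type*} [CommRing R] (X : Matrix (Fin n) (Fin n) R)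
    (A B : Finset (Fin n)) (hAB : A.card = B.card) :
    lap X A B = ∑ σ : Perm (Fin n), if A.map σ.toEmbedding = B then
      ((Perm.sign σ : ℤ) : R) * ∏ i, X i (σ i) else 0 := by
  have hc : Bᶜ.card = Aᶜ.card := by rw [card_compl, card_compl, hAB]
  set uA := finSumEquivOfFinset (s := A) rfl rfl with huA
  set uB := finSumEquivOfFinset hAB.symm hc with huB
  set Y : Matrix (Fin n) (Fin n) R :=
    Matrix.of fun i j => if (i ∈ A ↔ j ∈ B) then X i j else 0 with hY
  have mA : ∀ x, A.orderEmbOfFin rfl x ∈ A := fun x => orderEmbOfFin_mem _ _ _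
  have mB : ∀ x, B.orderEmbOfFin hAB.symm x ∈ B := fun x => orderEmbOfFin_mem _ _ _
  have mA' : ∀ x, Aᶜ.orderEmbOfFin rfl x ∉ A := fun x =>
    mem_compl.1 (orderEmbOfFin_mem _ _ _)
  have mB' : ∀ x, Bᶜ.orderEmbOfFin hc x ∉ B := fun x =>
    mem_compl.1 (orderEmbOfFin_mem _ _ _)
  have h1 : minorM X A B * minorM X Aᶜ Bᶜ = (Y.submatrix uA uB).det := by
    rw [minorM_eq X A B rfl hAB.symm, minorM_eq X Aᶜ Bᶜ rfl hc,
      ← Matrix.det_fromBlocks_zero₂₁ _ 0]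
    congr 1
    ext i j
    rcases i with i | i <;> rcases j with j | j <;>
      simp [hY, huA, huB, mA, mB, mA', mB']
  have h2 : Y.submatrix uA uB = (Y.submatrix id (uA.symm.trans uB)).submatrix uA uA := by
    ext i j; simp
  have h3 : Y.det = ∑ σ : Perm (Fin n), if A.map σ.toEmbedding = B then
      ((Perm.sign σ : ℤ) : R) * ∏ i, X i (σ i) else 0 := by
    rw [← Matrix.det_transpose, Matrix.det_apply']
    apply sum_congr rfl
    intro σ _
    split_ifs with h
    · rw [map_eq_iff] at h
      simp [hY, h]
    · rw [map_eq_iff] at h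
      push Not at h
      obtain ⟨i, hi⟩ := h
      rw [prod_eq_zero (mem_univ i), mul_zero]
      simp only [hY, Matrix.transpose_apply, Matrix.of_apply]
      rw [if_neg]
      tauto
  rw [lap, h1, h2, Matrix.det_submatrix_equiv_self, Matrix.det_permute', ← h3, ← mul_assoc,
    sign_shuffle2]
  have : (-1 : R) ^ (∑ i ∈ A, ((i : ℕ) + 1) + ∑ j ∈ B, ((j : ℕ) + 1)) = (-1) ^ (wt A + wt B) := rfl
  rw [this]
  push_cast
  rw [← mul_pow]
  simp

lemma lap_zero {n : ℕ} {R : Type*} [CommRing R] (X : Matrix (Fin n) (Fin n) R)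
    (A B : Finset (Fin n)) (hAB : A.card ≠ B.card) : lap X A B = 0 := by
  simp [lap, minorM, hAB]

/-- Indicator of the set of permutations mapping `A` to `B`. -/
def ind {n : ℕ} (A B : Finset (Fin n)) : Perm (Fin n) → ℤ :=
  fun σ => if A.map σ.toEmbedding = B then 1 else 0

lemma ind_compl {n : ℕ} (A B : Finset (Fin n)) : ind Aᶜ Bᶜ = ind A B := by
  funext σ
  simp only [ind]
  congr 1
  simp only [map_eq_iff, mem_compl, not_iff_not]

lemma ind_inv {n : ℕ} (A B : Finset (Fin n)) (σ : Perm (Fin n)) : ind A B σ⁻¹ = ind B A σ := by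
  simp only [ind]
  congr 1
  simp only [map_eq_iff, eq_iff_iff]
  constructor
  · intro h i
    have := h (σ i)
    simp at this
    exact this.symm
  · intro h i
    have := h (σ⁻¹ i)
    simp at this
    exact this.symm

/-- co-weight -/
def cw {n : ℕ} (A : Finset (Fin n)) : ℕ := ∑ i ∈ A, (n - (i : ℕ))

lemma ind_sub {n : ℕ} (C B : Finset (Fin n)) (σ : Perm (Fin n)) :
    ∑ B' ∈ B.powersetCard C.card, ind C B' σ = if C.map σ.toEmbedding ⊆ B then 1 else 0 := by
  simp only [ind]
  rw [sum_ite_eq]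
  simp [mem_powersetCard]

lemma incl_excl {n : ℕ} (D Q B : Finset (Fin n)) (σ : Perm (Fin n)) :
    ∑ J ∈ D.powerset, (-1 : ℤ) ^ J.card * (if (Q ∪ J).map σ.toEmbedding ⊆ B then 1 else 0) =
      if Q.map σ.toEmbedding ⊆ B ∧ ∀ d ∈ D, σ d ∉ B then 1 else 0 := by
  classical
  by_cases hQ : Q.map σ.toEmbedding ⊆ B
  · have h1 : ∀ J : Finset (Fin n), ((Q ∪ J).map σ.toEmbedding ⊆ B) ↔ ∀ j ∈ J, σ j ∈ B := by
      intro J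
      rw [map_union, union_subset_iff]
      simp only [hQ, true_and]
      constructor
      · intro h j hj
        exact h (mem_map_of_mem _ hj)
      · intro h x hx
        obtain ⟨j, hj, rfl⟩ := mem_map.1 hx
        exact h j hj
    simp only [h1, hQ, true_and, mul_ite, mul_one, mul_zero]
    rw [← sum_filter]
    have h2 : D.powerset.filter (fun J => ∀ j ∈ J, σ j ∈ B) =
        (D.filter fun d => σ d ∈ B).powerset := by
      ext J
      simp only [mem_filter, mem_powerset, subset_iff]
      constructor
      · rintro ⟨a, b⟩ x hx; exact ⟨a hx, b _ hx⟩
      · intro h; exact ⟨fun x hx => (h hx).1, fun x hx => (h hx).2⟩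
    rw [h2, sum_powerset_neg_one_pow_card]
    simp only [filter_eq_empty_iff]
  · have h1 : ∀ J : Finset (Fin n), ¬ ((Q ∪ J).map σ.toEmbedding ⊆ B) := by
      intro J h
      rw [map_union, union_subset_iff] at h
      exact hQ h.1
    simp [h1, hQ]

lemma garnir {n : ℕ} (D Q B : Finset (Fin n)) :
    ∑ E ∈ (univ : Finset (Finset (Fin n))).filter
      (fun E => E.card = B.card ∧ Q ⊆ E ∧ Disjoint D E), ind E B =
    ∑ J ∈ D.powerset, (-1 : ℤ) ^ J.card •
      ∑ B' ∈ B.powersetCard (Q ∪ J).card, ind (Q ∪ J) B' := by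
  funext σ
  simp only [Finset.sum_apply, Pi.smul_apply, smul_eq_mul, ind_sub, incl_excl]
  simp only [ind]
  have h1 : ∀ E : Finset (Fin n), E.map σ.toEmbedding = B ↔ B.map σ.symm.toEmbedding = E := by
    intro E
    constructor <;> rintro rfl <;> ext x <;> simp
  simp only [h1]
  rw [sum_ite_eq]
  congr 1
  simp only [mem_filter, mem_univ, true_and, card_map, eq_iff_iff]
  have h2 : Q ⊆ B.map σ.symm.toEmbedding ↔ Q.map σ.toEmbedding ⊆ B := by
    constructor
    · intro h x hx
      obtain ⟨y, hy, rfl⟩ := mem_map.1 hx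
      simpa using h hy
    · intro h x hx
      simpa using h (mem_map_of_mem _ hx)
  rw [h2, disjoint_left]
  simp

lemma step {n : ℕ} (M : AddSubgroup (Perm (Fin n) → ℤ)) (E B : Finset (Fin n))
    (hEB : E.card = B.card) (m : ℕ)
    (hm : (univ.filter fun i : Fin n => (i : ℕ) < m ∧ i ∉ E).card <
      (univ.filter fun i : Fin n => (i : ℕ) < m ∧ i ∈ E).card)
    (h1 : ∀ C B' : Finset (Fin n), C.card = B'.card → C.card < E.card → ind C B' ∈ M)
    (h2 : ∀ E' : Finset (Fin n), E'.card = E.card → cw E' < cw E → ind E' B ∈ M) :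
    ind E B ∈ M := by
  set D := univ.filter fun i : Fin n => (i : ℕ) < m ∧ i ∉ E with hD
  set P := univ.filter fun i : Fin n => (i : ℕ) < m ∧ i ∈ E with hP
  set Q := E.filter fun i : Fin n => ¬ (i : ℕ) < m with hQ
  have hPE : P = E.filter fun i : Fin n => (i : ℕ) < m := by
    ext x; simp [hP, and_comm]
  have hPQ : P.card + Q.card = E.card := by
    rw [hPE, hQ]
    exact card_filter_add_card_filter_not _
  have hg := garnir D Q B
  have hEmem : E ∈ (univ : Finset (Finset (Fin n))).filter
      (fun E => E.card = B.card ∧ Q ⊆ E ∧ Disjoint D E) := by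
    simp only [mem_filter, mem_univ, true_and]
    refine ⟨hEB, filter_subset _ _, ?_⟩
    rw [disjoint_left]
    intro x hx
    simp [hD] at hx
    exact hx.2
  rw [← add_sum_erase _ _ hEmem] at hg
  rw [eq_sub_of_add_eq hg]
  apply M.sub_mem
  · apply M.sum_mem
    intro J hJ
    apply M.zsmul_mem
    apply M.sum_mem
    intro B' hB'
    apply h1
    · rw [(mem_powersetCard.1 hB').2]
    · have := card_union_le Q J
      have := card_le_card (mem_powerset.1 hJ)
      omega
  · apply M.sum_mem
    intro E' hE'
    simp only [mem_erase, mem_filter, mem_univ, true_and] at hE'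
    obtain ⟨hne, hc, hQE, hDE⟩ := hE'
    apply h2 _ (by omega)
    -- weights
    have hlow : ∀ x ∈ E', (x : ℕ) < m → x ∈ E := by
      intro x hx hxm
      by_contra hxE
      exact disjoint_left.1 hDE (by simp [hD, hxm, hxE]) hx
    have a1 : cw E = cw (E ∩ E') + cw (E \ E') := by
      rw [cw, cw, cw, add_comm, ← sum_sdiff (s₁ := E ∩ E') (s₂ := E) inter_subset_left]
      congr 2
      ext x; simp 
    have a2 : cw E' = cw (E ∩ E') + cw (E' \ E) := by
      rw [cw, cw, cw, add_comm, ← sum_sdiff (s₁ := E ∩ E') (s₂ := E') inter_subset_right]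
      congr 2
      ext x; simp
    have hcard : (E \ E').card = (E' \ E).card := by
      rw [card_sdiff_comm]; omega
    have hne2 : (E' \ E).Nonempty := by
      rw [nonempty_iff_ne_empty]
      intro h0
      rw [sdiff_eq_empty_iff_subset] at h0
      exact hne (eq_of_subset_of_card_le h0 (by omega))
    have b1 : cw (E' \ E) ≤ (E' \ E).card • (n - m) := by
      apply sum_le_card_nsmul
      intro x hx
      rw [mem_sdiff] at hx
      have : ¬ (x : ℕ) < m := fun h => hx.2 (hlow x hx.1 h)
      omega
    have b2 : (E \ E').card • (n - m + 1) ≤ cw (E \ E') := by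
      apply card_nsmul_le_sum
      intro x hx
      rw [mem_sdiff] at hx
      have : (x : ℕ) < m := by
        by_contra h
        exact hx.2 (hQE (by simp [hQ, hx.1]; omega))
      have := x.2
      omega
    have : 0 < (E' \ E).card := card_pos.2 hne2
    rw [hcard] at b2
    simp only [smul_eq_mul, mul_add] at b1 b2
    omega

lemma domLE_iff {α : Type*} [LinearOrder α] (S T : Finset α) {a b : ℕ} (hS : S.card = a)
    (hT : T.card = b) :
    domLE S T ↔ ∃ h : b ≤ a, ∀ i : Fin b,
      S.orderEmbOfFin hS (Fin.castLE h i) ≤ T.orderEmbOfFin hT i := by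
  subst hS hT
  simp only [domLE, orderEmbOfFin_apply]
  constructor
  · rintro ⟨h, h'⟩
    exact ⟨h, fun i => h' i (by simp) (by simp; omega)⟩
  · rintro ⟨h, h'⟩
    exact ⟨h, fun ν h1 h2 => h' ⟨ν, by simpa using h1⟩⟩

lemma not_good {n : ℕ} (E : Finset (Fin n)) (h : ¬ goodSet Eᶜ) :
    ∃ m : ℕ, (univ.filter fun i : Fin n => (i : ℕ) < m ∧ i ∉ E).card <
      (univ.filter fun i : Fin n => (i : ℕ) < m ∧ i ∈ E).card := by
  rw [goodSet, compl_compl, domLE_iff _ _ rfl rfl] at h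
  push Not at h
  by_cases hc : E.card ≤ Eᶜ.card
  · obtain ⟨i, hi⟩ := h hc
    refine ⟨(E.orderEmbOfFin rfl i : ℕ) + 1, ?_⟩
    have b1 : (univ.filter fun x : Fin n =>
        (x : ℕ) < (E.orderEmbOfFin rfl i : ℕ) + 1 ∧ x ∉ E).card ≤ (Iio i).card := by
      rw [← card_map ((Fin.castLEEmb hc).trans (Eᶜ.orderEmbOfFin rfl).toEmbedding)]
      apply card_le_card
      intro x hx
      simp only [mem_filter, mem_univ, true_and] at hx
      have hx2 : x ∈ Set.range (Eᶜ.orderEmbOfFin rfl) := by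
        rw [range_orderEmbOfFin]; simpa using hx.2
      obtain ⟨y, rfl⟩ := hx2
      have : Eᶜ.orderEmbOfFin rfl y < Eᶜ.orderEmbOfFin rfl (Fin.castLE hc i) := by
        refine lt_of_le_of_lt ?_ hi
        rw [Fin.le_def]; omega
      rw [OrderEmbedding.lt_iff_lt] at this
      have hy : (y : ℕ) < i := this
      rw [mem_map]
      exact ⟨⟨y, by omega⟩, by rw [mem_Iio]; exact hy, rfl⟩
    have b2 : (Iic i).card ≤ (univ.filter fun x : Fin n =>
        (x : ℕ) < (E.orderEmbOfFin rfl i : ℕ) + 1 ∧ x ∈ E).card := by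
      rw [← card_map (E.orderEmbOfFin rfl).toEmbedding]
      apply card_le_card
      intro x hx
      obtain ⟨y, hy, rfl⟩ := mem_map.1 hx
      rw [mem_Iic] at hy
      have := (E.orderEmbOfFin rfl).monotone hy
      rw [Fin.le_def] at this
      simp only [mem_filter, mem_univ, true_and]
      refine ⟨?_, orderEmbOfFin_mem _ _ _⟩
      change ((E.orderEmbOfFin rfl y : Fin n) : ℕ) < _
      omega
    rw [Fin.card_Iic] at b2
    rw [Fin.card_Iio] at b1
    omega
  · refine ⟨n, ?_⟩
    push Not at hc
    have e1 : (univ.filter fun x : Fin n => (x : ℕ) < n ∧ x ∉ E) = Eᶜ := by ext; simp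
    have e2 : (univ.filter fun x : Fin n => (x : ℕ) < n ∧ x ∈ E) = E := by ext; simp
    rw [e1, e2]; exact hc

/-- the additive group spanned by good indicators -/
def goodM (n : ℕ) : AddSubgroup (Perm (Fin n) → ℤ) :=
  AddSubgroup.closure {h | ∃ A B : Finset (Fin n),
    A.card = B.card ∧ goodSet A ∧ goodSet B ∧ h = ind A B}

lemma ind_mem {n : ℕ} : ∀ (k : ℕ) (w : ℕ) (E B : Finset (Fin n)), E.card = k → B.card = k →
    cw E + cw B = w → ind E B ∈ goodM n := by
  intro k
  induction k using Nat.strong_induction_on with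
  | _ k ihk =>
  intro w
  induction w using Nat.strong_induction_on with
  | _ w ihw =>
  intro E B hE hB hw
  by_cases gE : goodSet Eᶜ
  · by_cases gB : goodSet Bᶜ
    · apply AddSubgroup.subset_closure
      exact ⟨Eᶜ, Bᶜ, by rw [card_compl, card_compl, hE, hB], gE, gB, (ind_compl _ _).symm⟩
    · obtain ⟨m, hm⟩ := not_good B gB
      let φ : (Perm (Fin n) → ℤ) →+ (Perm (Fin n) → ℤ) :=
        { toFun := fun h σ => h σ⁻¹, map_zero' := rfl, map_add' := fun _ _ => rfl }
      have hφ : ∀ C D, φ (ind C D) = ind D C := fun C D => funext fun σ => ind_inv C D σ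
      have := step ((goodM n).comap φ) B E (by omega) m hm ?_ ?_
      · rw [AddSubgroup.mem_comap, hφ] at this
        exact this
      · intro C D h1 h2
        rw [AddSubgroup.mem_comap, hφ]
        exact ihk C.card (by omega) _ D C h1.symm rfl rfl
      · intro E' h1 h2
        rw [AddSubgroup.mem_comap, hφ]
        exact ihw (cw E + cw E') (by omega) E E' hE (by omega) rfl
  · obtain ⟨m, hm⟩ := not_good E gE
    apply step (goodM n) E B (by omega) m hm
    · intro C D h1 h2
      exact ihk C.card (by omega) _ C D rfl h1.symm rfl
    · intro E' h1 h2
      exact ihw (cw E' + cw B) (by omega) E' B (by omega) hB rfl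

/-- swap the `i`-th element of the left and of the right for all `i ∈ J` -/
def tauFun {m k : ℕ} (h : k ≤ m) (J : Finset (Fin k)) : Fin m ⊕ Fin k → Fin m ⊕ Fin k
  | Sum.inl j => if hj : ∃ h : (j : ℕ) < k, (⟨j, h⟩ : Fin k) ∈ J then Sum.inr ⟨j, hj.1⟩
      else Sum.inl j
  | Sum.inr i => if i ∈ J then Sum.inl (Fin.castLE h i) else Sum.inr i

lemma tauFun_invol {m k : ℕ} (h : k ≤ m) (J : Finset (Fin k)) :
    Function.Involutive (tauFun h J) := by
  rintro (j | i)
  · by_cases hj : ∃ h : (j : ℕ) < k, (⟨j, h⟩ : Fin k) ∈ J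
    · simp [tauFun, hj]
      obtain ⟨a, b⟩ := hj
      simp [b]
    · simp [tauFun, hj]
  · by_cases hi : i ∈ J <;> simp [tauFun, hi]

def tau {m k : ℕ} (h : k ≤ m) (J : Finset (Fin k)) : Perm (Fin m ⊕ Fin k) :=
  (tauFun_invol h J).toPerm

lemma tau_tau {m k : ℕ} (h : k ≤ m) (J : Finset (Fin k)) (x) : tau h J (tau h J x) = x :=
  tauFun_invol h J x

lemma tau_agree {m k : ℕ} (h : k ≤ m) (J J' : Finset (Fin k)) (i : Fin k)
    (hJ : ∀ i', i' ≠ i → (i' ∈ J ↔ i' ∈ J')) (x : Fin m ⊕ Fin k)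
    (h1 : x ≠ Sum.inl (Fin.castLE h i)) (h2 : x ≠ Sum.inr i) : tau h J x = tau h J' x := by
  change tauFun h J x = tauFun h J' x
  rcases x with j | i'
  · have : (∃ h : (j : ℕ) < k, (⟨j, h⟩ : Fin k) ∈ J) ↔
        (∃ h : (j : ℕ) < k, (⟨j, h⟩ : Fin k) ∈ J') := by
      apply exists_congr
      intro hj
      apply hJ
      rintro rfl
      exact h1 rfl
    simp only [tauFun, this]
  · have : i' ∈ J ↔ i' ∈ J' := hJ _ (by rintro rfl; exact h2 rfl)
    simp only [tauFun, this]

lemma tau_pair {m k : ℕ} (h : k ≤ m) (J : Finset (Fin k)) (i : Fin k) :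
    (tau h J (Sum.inl (Fin.castLE h i)) = Sum.inl (Fin.castLE h i) ∧
      tau h J (Sum.inr i) = Sum.inr i) ∨
    (tau h J (Sum.inl (Fin.castLE h i)) = Sum.inr i ∧
      tau h J (Sum.inr i) = Sum.inl (Fin.castLE h i)) := by
  have e : ⇑(tau h J) = tauFun h J := rfl
  rw [e]
  by_cases hi : i ∈ J <;> simp [tauFun, hi]

lemma tau_cond {m k : ℕ} (h : k ≤ m) (J J' : Finset (Fin k)) (i : Fin k)
    (hJ : ∀ i', i' ≠ i → (i' ∈ J ↔ i' ∈ J')) (c d : Fin m ⊕ Fin k → Prop)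
    (h1 : ¬ c (Sum.inl (Fin.castLE h i))) (h2 : ¬ c (Sum.inr i))
    (H : ∀ x, c x ↔ d (tau h J x)) : ∀ x, c x ↔ d (tau h J' x) := by
  have d1 : ¬ d (Sum.inl (Fin.castLE h i)) ∧ ¬ d (Sum.inr i) := by
    have a := H (Sum.inl (Fin.castLE h i))
    have b := H (Sum.inr i)
    rcases tau_pair h J i with ⟨e1, e2⟩ | ⟨e1, e2⟩ <;> rw [e1] at a <;> rw [e2] at b <;> tauto
  intro x
  by_cases e1 : x = Sum.inl (Fin.castLE h i)
  · subst e1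
    rcases tau_pair h J' i with ⟨e1, e2⟩ | ⟨e1, e2⟩ <;> rw [e1] <;> tauto
  by_cases e2 : x = Sum.inr i
  · subst e2
    rcases tau_pair h J' i with ⟨e1, e2⟩ | ⟨e1, e2⟩ <;> rw [e2] <;> tauto
  rw [H, tau_agree h J J' i hJ x e1 e2]

open Classical in
lemma cancel {m k : ℕ} (h : k ≤ m) (i : Fin k) (c d : Fin m ⊕ Fin k → Prop)
    (h1 : ¬ c (Sum.inl (Fin.castLE h i))) (h2 : ¬ c (Sum.inr i)) :
    ∑ J : Finset (Fin k), (-1 : ℤ) ^ J.card * (if ∀ x, c x ↔ d (tau h J x) then 1 else 0) = 0 := by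
  have key : ∀ J : Finset (Fin k), i ∉ J →
      ((∀ x, c x ↔ d (tau h J x)) ↔ (∀ x, c x ↔ d (tau h (insert i J) x))) := by
    intro J hi
    constructor
    · apply tau_cond h _ _ i _ c d h1 h2
      intro i' hi'; simp [hi']
    · apply tau_cond h _ _ i _ c d h1 h2
      intro i' hi'; simp [hi']
  rw [← Finset.powerset_univ, ← insert_erase (mem_univ i), sum_powerset_insert (by simp),
    ← sum_add_distrib]
  apply sum_eq_zero
  intro J hJ
  have hi : i ∉ J := fun h => by
    have := mem_powerset.1 hJ h
    simp at this
  simp only [key J hi, card_insert_of_notMem hi]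
  ring

open Classical in
lemma cancel' {m k : ℕ} (h : k ≤ m) (i : Fin k) (c d : Fin m ⊕ Fin k → Prop)
    (h1 : ¬ d (Sum.inl (Fin.castLE h i))) (h2 : ¬ d (Sum.inr i)) :
    ∑ J : Finset (Fin k), (-1 : ℤ) ^ J.card * (if ∀ x, c x ↔ d (tau h J x) then 1 else 0) = 0 := by
  refine Eq.trans ?_ (cancel h i d c h1 h2)
  apply sum_congr rfl
  intro J _
  have : (∀ x, c x ↔ d (tau h J x)) ↔ (∀ x, d x ↔ c (tau h J x)) := by
    constructor
    · intro H x; rw [H, tau_tau]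
    · intro H x; rw [H, tau_tau]
  simp only [this]

/-- The test functional. -/
def Phi {n m k : ℕ} (h : k ≤ m) (uA uB : Fin m ⊕ Fin k ≃ Fin n) (C D : Finset (Fin n)) : ℤ :=
  ∑ J : Finset (Fin k), (-1 : ℤ) ^ J.card * ind C D ((uA.symm.trans (tau h J)).trans uB)

lemma Phi_eq {n m k : ℕ} (h : k ≤ m) (uA uB : Fin m ⊕ Fin k ≃ Fin n) (C D : Finset (Fin n))
    (J : Finset (Fin k)) :
    C.map ((uA.symm.trans (tau h J)).trans uB).toEmbedding = D ↔
      ∀ x, uA x ∈ C ↔ uB (tau h J x) ∈ D := by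
  rw [map_eq_iff, ← uA.forall_congr_right]
  simp

lemma Phi_ne {n m k : ℕ} (h : k ≤ m) (uA uB : Fin m ⊕ Fin k ≃ Fin n) (C D : Finset (Fin n))
    (hP : Phi h uA uB C D ≠ 0) (i : Fin k) :
    (uA (Sum.inl (Fin.castLE h i)) ∈ C ∨ uA (Sum.inr i) ∈ C) ∧
    (uB (Sum.inl (Fin.castLE h i)) ∈ D ∨ uB (Sum.inr i) ∈ D) := by
  classical
  constructor
  · by_contra hc
    push Not at hc
    apply hP
    refine Eq.trans ?_ (cancel h i (fun x => uA x ∈ C) (fun x => uB x ∈ D) hc.1 hc.2)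
    refine sum_congr rfl fun J _ => ?_
    simp only [ind, Phi_eq]
    congr
  · by_contra hc
    push Not at hc
    apply hP
    refine Eq.trans ?_ (cancel' h i (fun x => uA x ∈ C) (fun x => uB x ∈ D) hc.1 hc.2)
    refine sum_congr rfl fun J _ => ?_
    simp only [ind, Phi_eq]
    congr

lemma hit {n m k : ℕ} (h : k ≤ m) (u : Fin m ⊕ Fin k ≃ Fin n) (E C : Finset (Fin n))
    (hE : E = univ.map (Function.Embedding.inr.trans u.toEmbedding))
    (hu : ∀ i : Fin k, u (Sum.inl (Fin.castLE h i)) ≤ u (Sum.inr i)) (hC : C.card ≤ k)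
    (H : ∀ i : Fin k, u (Sum.inl (Fin.castLE h i)) ∈ C ∨ u (Sum.inr i) ∈ C) :
    C.card = k ∧ wt C ≤ wt E ∧ (wt C = wt E → C = E) := by
  have H' : ∀ i : Fin k, ∃ v : Fin m ⊕ Fin k, (v = Sum.inl (Fin.castLE h i) ∨ v = Sum.inr i) ∧
      u v ∈ C := by
    intro i
    rcases H i with hi | hi
    · exact ⟨_, Or.inl rfl, hi⟩
    · exact ⟨_, Or.inr rfl, hi⟩
  choose v hv hvC using H'
  have vinj : Function.Injective v := by
    intro i j hij
    rcases hv i with a | a <;> rcases hv j with b | b <;> rw [a, b] at hij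
    · simpa using hij
    · simp at hij
    · simp at hij
    · simpa using hij
  have hCeq : univ.map ⟨fun i => u (v i), u.injective.comp vinj⟩ = C := by
    apply eq_of_subset_of_card_le
    · intro x hx
      obtain ⟨i, _, rfl⟩ := mem_map.1 hx
      exact hvC i
    · simpa using hC
  have hle : ∀ i ∈ (univ : Finset (Fin k)), (u (v i) : ℕ) + 1 ≤ (u (Sum.inr i) : ℕ) + 1 := by
    intro i _
    have := hu i
    rw [Fin.le_def] at this
    rcases hv i with a | a <;> rw [a] <;> omega
  have wC : wt C = ∑ i : Fin k, ((u (v i) : ℕ) + 1) := by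
    rw [← hCeq, wt, sum_map]; rfl
  have wE : wt E = ∑ i : Fin k, ((u (Sum.inr i) : ℕ) + 1) := by
    rw [hE, wt, sum_map]; rfl
  refine ⟨by rw [← hCeq]; simp, ?_, ?_⟩
  · rw [wC, wE]; exact sum_le_sum hle
  · rw [wC, wE]
    intro he
    have := (sum_eq_sum_iff_of_le hle).1 he
    rw [← hCeq, hE]
    congr 1
    ext i
    have := this i (mem_univ i)
    change ((u (v i) : Fin n) : ℕ) = (u (Sum.inr i) : Fin n)
    omega

lemma Phi_self {n m k : ℕ} (h : k ≤ m) (uA uB : Fin m ⊕ Fin k ≃ Fin n) (C D : Finset (Fin n))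
    (hC : C = univ.map (Function.Embedding.inr.trans uA.toEmbedding))
    (hD : D = univ.map (Function.Embedding.inr.trans uB.toEmbedding)) :
    Phi h uA uB C D = 1 := by
  have mC : ∀ x, uA x ∈ C ↔ ∃ i, x = Sum.inr i := by
    intro x; rw [hC]; simp [eq_comm]
  have mD : ∀ x, uB x ∈ D ↔ ∃ i, x = Sum.inr i := by
    intro x; rw [hD]; simp [eq_comm]
  rw [Phi, sum_eq_single ∅]
  · simp only [ind, Phi_eq]
    rw [if_pos]
    · simp
    · intro x
      rw [mC, mD]
      change _ ↔ ∃ i, tauFun h ∅ x = _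
      rcases x with x | x <;> simp [tauFun]
  · intro J _ hJ
    simp only [ind, Phi_eq]
    rw [if_neg, mul_zero]
    intro H
    obtain ⟨i, hi⟩ := nonempty_iff_ne_empty.2 hJ
    have := H (Sum.inr i)
    rw [mC, mD] at this
    obtain ⟨j, hj⟩ := this.1 ⟨i, rfl⟩
    change tauFun h J (Sum.inr i) = _ at hj
    simp [tauFun, hi] at hj
  · simp

lemma good_data {n m k : ℕ} (A : Finset (Fin n)) (hm : A.card = m) (hk : Aᶜ.card = k)
    (g : goodSet A) : ∃ h : k ≤ m,
      Aᶜ = univ.map (Function.Embedding.inr.trans (finSumEquivOfFinset hm hk).toEmbedding) ∧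
      ∀ i : Fin k, finSumEquivOfFinset hm hk (Sum.inl (Fin.castLE h i)) ≤
        finSumEquivOfFinset hm hk (Sum.inr i) := by
  rw [goodSet, domLE_iff _ _ hm hk] at g
  obtain ⟨h, hh⟩ := g
  refine ⟨h, ?_, hh⟩
  rw [← map_orderEmbOfFin_univ Aᶜ hk]
  rfl

lemma indep {n : ℕ} {R : Type*} [CommRing R] [Fintype {p : Finset (Fin n) × Finset (Fin n) //
      p.1.card = p.2.card ∧ goodSet p.1 ∧ goodSet p.2}] (c : {p : Finset (Fin n) × Finset (Fin n) //
      p.1.card = p.2.card ∧ goodSet p.1 ∧ goodSet p.2} → R)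
    (H : ∀ σ : Perm (Fin n), ∑ g, c g * ((ind g.1.1 g.1.2 σ : ℤ) : R) = 0) : ∀ g, c g = 0 := by
  classical
  by_contra hne
  push Not at hne
  obtain ⟨g0, hg0⟩ := hne
  obtain ⟨g1, hg1, hmax⟩ := exists_max_image (univ.filter fun g => c g ≠ 0)
    (fun g => g.1.1ᶜ.card) ⟨g0, by simpa using hg0⟩
  obtain ⟨g, hg, hmin⟩ := exists_min_image
    (univ.filter fun g => c g ≠ 0 ∧ g.1.1ᶜ.card = g1.1.1ᶜ.card)
    (fun g => wt g.1.1ᶜ + wt g.1.2ᶜ) ⟨g1, by simpa using hg1⟩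
  simp only [mem_filter, mem_univ, true_and] at hg1 hmax hg hmin
  obtain ⟨hgc, hgk⟩ := hg
  have hcc : g.1.2ᶜ.card = g.1.1ᶜ.card := by rw [card_compl, card_compl, g.2.1]
  obtain ⟨h, eA, lA⟩ := good_data g.1.1 rfl rfl g.2.2.1
  obtain ⟨_, eB, lB⟩ := good_data g.1.2 g.2.1.symm hcc g.2.2.2
  set uA := finSumEquivOfFinset (s := g.1.1) rfl rfl
  set uB := finSumEquivOfFinset g.2.1.symm hcc
  have total : ∑ g', c g' * ((Phi h uA uB g'.1.1ᶜ g'.1.2ᶜ : ℤ) : R) = 0 := by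
    simp only [Phi, ind_compl]
    push_cast
    simp only [mul_sum]
    rw [sum_comm]
    apply sum_eq_zero
    intro J _
    rw [← mul_zero ((-1 : R) ^ J.card), ← H ((uA.symm.trans (tau h J)).trans uB), mul_sum]
    apply sum_congr rfl
    intro g' _
    ring
  rw [sum_eq_single g] at total
  · rw [Phi_self h uA uB _ _ eA eB] at total
    simp at total
    exact hgc total
  · intro g' _ hne
    by_cases hc0 : c g' = 0
    · rw [hc0, zero_mul]
    by_cases hP : Phi h uA uB g'.1.1ᶜ g'.1.2ᶜ = 0
    · rw [hP]; simp
    exfalso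
    have hk := hmax g' hc0
    have hcc' : g'.1.2ᶜ.card = g'.1.1ᶜ.card := by rw [card_compl, card_compl, g'.2.1]
    have hh := Phi_ne h uA uB _ _ hP
    obtain ⟨a1, a2, a3⟩ := hit h uA _ _ eA lA (by omega) fun i => (hh i).1
    obtain ⟨b1, b2, b3⟩ := hit h uB _ _ eB lB (by omega) fun i => (hh i).2
    have hw := hmin g' ⟨hc0, by omega⟩
    have q1 := a3 (by omega)
    have q2 := b3 (by omega)
    apply hne
    apply Subtype.ext
    apply Prod.ext
    · exact compl_injective q1
    · exact compl_injective q2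
  · simp

/-- exponent of the monomial of a permutation -/
noncomputable def expo {n : ℕ} (σ : Perm (Fin n)) : (Fin n × Fin n) →₀ ℕ :=
  ∑ i, Finsupp.single (i, σ i) 1

lemma expo_inj {n : ℕ} : Function.Injective (expo (n := n)) := by
  have key : ∀ (σ : Perm (Fin n)) i j, expo σ (i, j) = if σ i = j then 1 else 0 := by
    intro σ i j
    rw [expo, Finsupp.finsetSum_apply, sum_eq_single i]
    · simp [Finsupp.single_apply]
    · intro b _ hb
      simp [Finsupp.single_apply, hb]
    · simp
  intro σ τ h
  ext1 i
  have := key σ i (τ i)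
  rw [h, key] at this
  by_contra hne
  simp [hne] at this

noncomputable def LL (n : ℕ) (R : Type*) [CommRing R] :
    (Perm (Fin n) → ℤ) →+ MvPolynomial (Fin n × Fin n) R where
  toFun h := ∑ σ, MvPolynomial.monomial (expo σ) ((h σ * Perm.sign σ : ℤ) : R)
  map_zero' := by simp
  map_add' := by
    intro a b
    rw [← sum_add_distrib]
    apply sum_congr rfl
    intro σ _
    rw [← map_add]
    congr 1
    push_cast [Pi.add_apply]
    ring

lemma lap_LL {n : ℕ} {R : Type*} [CommRing R] (A B : Finset (Fin n)) (h : A.card = B.card) :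
    lap (genX n n R) A B = LL n R (ind A B) := by
  rw [lap_eq _ _ _ h]
  change _ = ∑ σ, MvPolynomial.monomial (expo σ) ((ind A B σ * Perm.sign σ : ℤ) : R)
  apply sum_congr rfl
  intro σ _
  simp only [ind]
  split_ifs with h1
  · have : ∏ i, genX n n R i (σ i) = MvPolynomial.monomial (expo σ) 1 := by
      rw [expo, MvPolynomial.monomial_sum_one]
      rfl
    rw [this, one_mul, ← mul_one (((Perm.sign σ : ℤ) : R)), ← MvPolynomial.C_mul_monomial]
    simp
  · simp

lemma coeff_LL {n : ℕ} {R : Type*} [CommRing R] (h : Perm (Fin n) → ℤ) (τ : Perm (Fin n)) :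
    (LL n R h).coeff (expo τ) = ((h τ * Perm.sign τ : ℤ) : R) := by
  change (∑ σ, MvPolynomial.monomial (expo σ) ((h σ * Perm.sign σ : ℤ) : R)).coeff _ = _
  rw [MvPolynomial.coeff_sum, sum_eq_single τ]
  · simp
  · intro b _ hb
    rw [MvPolynomial.coeff_monomial, if_neg]
    exact fun e => hb (expo_inj e)
  · simp

lemma linIndep (n : ℕ) (R : Type*) [CommRing R] : LinearIndependent R (goodLap n R) := by
  classical
  have := Fintype.ofFinite {p : Finset (Fin n) × Finset (Fin n) //
      p.1.card = p.2.card ∧ goodSet p.1 ∧ goodSet p.2}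
  rw [Fintype.linearIndependent_iff]
  intro c hc
  apply indep
  intro σ
  have := congrArg (fun p => MvPolynomial.coeff (expo σ) p * ((Perm.sign σ : ℤ) : R)) hc
  simp only [MvPolynomial.coeff_sum, MvPolynomial.coeff_smul, MvPolynomial.coeff_zero,
    zero_mul, sum_mul] at this
  rw [← this]
  apply sum_congr rfl
  intro g _
  rw [goodLap, lap_LL _ _ g.2.1, coeff_LL]
  have hs : ((Perm.sign σ : ℤ) : R) * ((Perm.sign σ : ℤ) : R) = 1 := by
    rw [← Int.cast_mul, ← Units.val_mul, Int.units_mul_self]; simp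
  push_cast
  rw [smul_eq_mul, mul_assoc, mul_assoc, hs, mul_one]

lemma expand (n : ℕ) (R : Type*) [CommRing R] (S T : Finset (Fin n)) :
      ∃ (k : ℕ) (g : Fin k → {p : Finset (Fin n) × Finset (Fin n) //
          p.1.card = p.2.card ∧ goodSet p.1 ∧ goodSet p.2}) (ε : Fin k → ℤ),
        (∀ i, ε i = 1 ∨ ε i = -1) ∧
        lap (genX n n R) S T = ∑ i, (ε i : R) • goodLap n R (g i) := by
  by_cases hST : S.card = T.card
  swap
  · exact ⟨0, Fin.elim0, Fin.elim0, fun i => i.elim0, by simp [lap_zero _ _ _ hST]⟩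
  rw [lap_LL _ _ hST]
  have hmem : ind S T ∈ goodM n := ind_mem _ _ S T rfl hST.symm rfl
  generalize ind S T = h at hmem
  rw [goodM] at hmem
  induction hmem using AddSubgroup.closure_induction with
  | mem x hx =>
    obtain ⟨A, B, h1, h2, h3, rfl⟩ := hx
    refine ⟨1, fun _ => ⟨(A, B), h1, h2, h3⟩, fun _ => 1, fun _ => Or.inl rfl, ?_⟩
    simp [goodLap, lap_LL _ _ h1]
  | zero => exact ⟨0, Fin.elim0, Fin.elim0, fun i => i.elim0, by simp⟩
  | add x y _ _ hx hy =>
    obtain ⟨k1, g1, e1, p1, q1⟩ := hx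
    obtain ⟨k2, g2, e2, p2, q2⟩ := hy
    refine ⟨k1 + k2, Fin.append g1 g2, Fin.append e1 e2, ?_, ?_⟩
    · intro i
      refine Fin.addCases (fun i => ?_) (fun i => ?_) i
      · simpa using p1 i
      · simpa using p2 i
    · rw [map_add, q1, q2, Fin.sum_univ_add]
      simp
  | neg x _ hx =>
    obtain ⟨k1, g1, e1, p1, q1⟩ := hx
    refine ⟨k1, g1, fun i => - e1 i, ?_, ?_⟩
    · intro i
      rcases p1 i with h | h <;> simp [h]
    · rw [map_neg, q1]
      simp

end LapAux

/-- For the generic matrix over a nonzero commutative ring, the Laplace products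
`X{A|B}` with `|A| = |B|` and `A`, `B` good form a basis of the `R`-submodule spanned
by all Laplace products: they are linearly independent, they span the same submodule,
and every Laplace product is a `±1`-linear combination of them. -/
theorem statement17 (n : ℕ) (R : Type*) [CommRing R] [Nontrivial R] :
    LinearIndependent R (goodLap n R) ∧
    Submodule.span R (Set.range (goodLap n R)) =
      Submodule.span R {q : MvPolynomial (Fin n × Fin n) R |
        ∃ S T : Finset (Fin n), q = lap (genX n n R) S T} ∧
    ∀ S T : Finset (Fin n),
      ∃ (k : ℕ) (g : Fin k → {p : Finset (Fin n) × Finset (Fin n) //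
          p.1.card = p.2.card ∧ goodSet p.1 ∧ goodSet p.2}) (ε : Fin k → ℤ),
        (∀ i, ε i = 1 ∨ ε i = -1) ∧
        lap (genX n n R) S T = ∑ i, (ε i : R) • goodLap n R (g i) := by
  refine ⟨LapAux.linIndep n R, ?_, LapAux.expand n R⟩
  apply le_antisymm
  · apply Submodule.span_mono
    rintro _ ⟨g, rfl⟩
    exact ⟨g.1.1, g.1.2, rfl⟩
  · rw [Submodule.span_le]
    rintro _ ⟨S, T, rfl⟩
    obtain ⟨k, g, ε, _, h⟩ := LapAux.expand n R S T
    rw [h]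
    exact Submodule.sum_mem _ fun i _ =>
      Submodule.smul_mem _ _ (Submodule.subset_span ⟨g i, rfl⟩)
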